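/- arXiv:2402.18939 — 3 statements merged into one kernel-verified Lean document; each statement's English description precedes it below -/
import Mathlib

section
/- Lemma 5 (Macbeath's first lemma): Let α, β, γ be real numbers with α > 0 and γ > 0. Let h be a real number with 2h ∈ ℤ and let k be a positive integer such that |h − k²α| + 1/2 ≤ γ. Assume it is not the case that both α = h/k² and β = h/k + m/k + 2nα for some integers m, n (i.e. either α ≠ h/k² or β ≢ h/k modulo the subgroup of ℝ generated by 1/k and 2α). Then for every real number ν and each sign ε ∈ {+1, −1}, there exist integers x, y such that 0 < x + βy + ε·α·y² + ν ≤ γ. Moreover, if |h − k²α| + 1/2 < γ, then x, y can be chosen so that 0 < x + βy + ε·α·y² + ν < γ. -/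
/-!
Along `y = k t` the values `β y + ε α y² + ν` have second difference `2 D` modulo `1`, where
`D = ε (k² α - h)`. If modulo `1` all of them missed `(0, |D| + 1/2]`, then subtracting their
ceilings would leave a sequence in an interval of length `1/2 - |D|`. Its second difference, being
smaller than `1 - 2 |D|` and congruent to `2 D`, would equal `2 D`; but a bounded sequence with
constant second difference is constant, which forces `D = 0` and `k β + ε h ∈ ℤ`.
-/

open Set fwdDiff

section Bounded

variable {E : Type*} [NormedAddCommGroup E] [NormedSpace ℝ E] {u : ℕ → E} {d : E} {C : ℝ}

lemma eq_zero_of_fwdDiff_eq_of_norm_le (hu : ∀ t, Δ_[1] u t = d) (hC : ∀ t, ‖u t‖ ≤ C) :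
    d = 0 := by
  have u_eq (n : ℕ) : (n : ℝ) • d = u n - u 0 := by
    calc (n : ℝ) • d = ∑ t ∈ Finset.range n, Δ_[1] u t := by simp [hu, Nat.cast_smul_eq_nsmul]
      _ = u n - u 0 := Finset.sum_range_sub u n
  by_contra hd
  obtain ⟨n, hn⟩ := exists_nat_gt ((C + C) / ‖d‖)
  rw [div_lt_iff₀ (norm_pos_iff.mpr hd)] at hn
  refine hn.not_ge ?_
  calc (n : ℝ) * ‖d‖ = ‖u n - u 0‖ := by rw [← u_eq, norm_smul, RCLike.norm_natCast]
    _ ≤ C + C := norm_sub_le_of_le (hC n) (hC 0)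

lemma fwdDiff_eq_zero_of_norm_le (hu : ∀ t, Δ_[1] (Δ_[1] u) t = d) (hC : ∀ t, ‖u t‖ ≤ C) (t : ℕ) :
    Δ_[1] u t = 0 := by
  obtain rfl : d = 0 :=
    eq_zero_of_fwdDiff_eq_of_norm_le hu fun t ↦ norm_sub_le_of_le (hC (t + 1)) (hC t)
  have fwdDiff_const (t : ℕ) : Δ_[1] u t = Δ_[1] u 0 := by
    induction t with
    | zero => rfl
    | succ t ih => exact (sub_eq_zero.mp (hu t)).trans ih
  rw [fwdDiff_const, eq_zero_of_fwdDiff_eq_of_norm_le fwdDiff_const hC]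

end Bounded

lemma sub_ceil_mem_Ioc {R : Type*} [CommRing R] [LinearOrder R] [IsStrictOrderedRing R]
    [FloorRing R] {a c : R} (ha : ∀ x : ℤ, x + a ∉ Ioc 0 c) : a - ⌈a⌉ ∈ Ioc (c - 1) 0 := by
  have gap := ha (1 - ⌈a⌉)
  simp only [mem_Ioc, not_and, not_le, Int.cast_sub, Int.cast_one] at gap
  have lower := gap (by linarith [Int.ceil_lt_add_one a])
  exact ⟨by linarith, by linarith [Int.le_ceil a]⟩

lemma fwdDiff_fwdDiff_eq_of_mem_Ioc {r : ℕ → ℝ} {D : ℝ} (hr : ∀ t, r t ∈ Ioc (|D| - 1 / 2) 0)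
    (hmod : ∀ t, ∃ n : ℤ, Δ_[1] (Δ_[1] r) t = 2 * D + n) (t : ℕ) :
    Δ_[1] (Δ_[1] r) t = 2 * D := by
  obtain ⟨n, hn⟩ := hmod t
  have small : |Δ_[1] (Δ_[1] r) t| < 1 - 2 * |D| := by
    obtain ⟨lower₀, upper₀⟩ := hr t
    obtain ⟨lower₁, upper₁⟩ := hr (t + 1)
    obtain ⟨lower₂, upper₂⟩ := hr (t + 1 + 1)
    simp only [fwdDiff]
    exact abs_lt.mpr ⟨by linarith, by linarith⟩
  have abs_n_lt_one : |(n : ℝ)| < 1 := by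
    calc |(n : ℝ)| = |Δ_[1] (Δ_[1] r) t - 2 * D| := by rw [hn, add_sub_cancel_left]
      _ ≤ |Δ_[1] (Δ_[1] r) t| + |2 * D| := abs_sub _ _
      _ < 1 := by rw [abs_mul, abs_two]; linarith
  obtain rfl : n = 0 := Int.abs_lt_one_iff.mp (mod_cast abs_n_lt_one)
  simpa using hn

theorem exists_int_add_mem_Ioc {p : ℕ → ℝ} {D : ℝ}
    (hp : ∀ t, ∃ n : ℤ, Δ_[1] (Δ_[1] p) t = 2 * D + n)
    (hne : ¬ (D = 0 ∧ ∃ m : ℤ, Δ_[1] p 0 = m)) :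
    ∃ (t : ℕ) (x : ℤ), x + p t ∈ Ioc 0 (|D| + 1 / 2) := by
  by_contra! avoid
  let r (t : ℕ) : ℝ := p t - ⌈p t⌉
  have r_mem (t : ℕ) : r t ∈ Ioc (|D| - 1 / 2) 0 := by
    obtain ⟨lower, upper⟩ := sub_ceil_mem_Ioc (avoid t)
    exact ⟨lt_of_eq_of_lt (by ring) lower, upper⟩
  have r_mod (t : ℕ) : ∃ n : ℤ, Δ_[1] (Δ_[1] r) t = 2 * D + n := by
    obtain ⟨n, hn⟩ := hp t
    refine ⟨n - Δ_[1] (Δ_[1] fun s ↦ ⌈p s⌉) t, ?_⟩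
    simp only [fwdDiff, r] at hn ⊢
    push_cast
    linear_combination hn
  have r_second := fwdDiff_fwdDiff_eq_of_mem_Ioc r_mem r_mod
  have r_norm_le (t : ℕ) : ‖r t‖ ≤ 1 :=
    abs_le.mpr ⟨by linarith [(r_mem t).1, abs_nonneg D], by linarith [(r_mem t).2]⟩
  have r_const := fwdDiff_eq_zero_of_norm_le r_second r_norm_le
  refine hne ⟨?_, Δ_[1] (fun s ↦ ⌈p s⌉) 0, ?_⟩
  · have r_second_zero : Δ_[1] (Δ_[1] r) 0 = 0 := by rw [fwdDiff, r_const, r_const, sub_zero]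
    linarith [r_second 0]
  · have r_diff_zero := r_const 0
    simp only [fwdDiff, r] at r_diff_zero ⊢
    push_cast
    linear_combination r_diff_zero

lemma exists_eq_div_add_int_div {K : Type*} [Field K] [CharZero K] {β h ε : K} {k m : ℤ}
    (hh : ∃ j : ℤ, 2 * h = j) (hk : k ≠ 0) (hε : ε = 1 ∨ ε = -1) (hβ : β * k + ε * h = m) :
    ∃ n : ℤ, β = h / k + n / k := by
  obtain ⟨j, hj⟩ := hh
  have hk₀ : (k : K) ≠ 0 := mod_cast hk
  suffices ∃ n : ℤ, β * k = h + n by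
    obtain ⟨n, hn⟩ := this
    exact ⟨n, by rw [← add_div, ← hn, mul_div_cancel_right₀ β hk₀]⟩
  rcases hε with rfl | rfl
  · exact ⟨m - j, by push_cast; linear_combination hβ - hj⟩
  · exact ⟨m, by linear_combination hβ⟩

theorem macbeath_first_general {α β h : ℝ} {k : ℤ} (hh : ∃ j : ℤ, 2 * h = j) (hk : k ≠ 0)
    (hne : ¬ (α = h / (k : ℝ) ^ 2 ∧ ∃ m : ℤ, β = h / (k : ℝ) + (m : ℝ) / (k : ℝ)))
    (ν ε : ℝ) (hε : ε = 1 ∨ ε = -1) :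
    ∃ x y : ℤ, 0 < (x : ℝ) + β * (y : ℝ) + ε * α * (y : ℝ) ^ 2 + ν ∧
      (x : ℝ) + β * (y : ℝ) + ε * α * (y : ℝ) ^ 2 + ν ≤ |h - (k : ℝ) ^ 2 * α| + 1 / 2 := by
  let p (t : ℕ) : ℝ := β * (k * t) + ε * α * (k * t) ^ 2 + ν
  have p_second (t : ℕ) : ∃ n : ℤ, Δ_[1] (Δ_[1] p) t = 2 * (ε * (k ^ 2 * α - h)) + n := by
    obtain ⟨j, hj⟩ := hh
    obtain ⟨e, rfl⟩ : ∃ e : ℤ, (e : ℝ) = ε := by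
      rcases hε with rfl | rfl
      exacts [⟨1, by norm_num⟩, ⟨-1, by norm_num⟩]
    refine ⟨e * j, ?_⟩
    simp only [fwdDiff, p]
    push_cast
    linear_combination (e : ℝ) * hj
  have p_nonconst : ¬ (ε * (k ^ 2 * α - h) = 0 ∧ ∃ m : ℤ, Δ_[1] p 0 = m) := by
    rintro ⟨hD, m, hm⟩
    have hα : k ^ 2 * α = h := by
      rcases hε with rfl | rfl <;> linarith
    have hβ : β * k + ε * h = m := by
      rw [← hm, ← hα]
      simp only [fwdDiff, p]
      push_cast
      ring
    exact hne ⟨eq_div_of_mul_eq (by positivity) (by rw [mul_comm, hα]),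
      exists_eq_div_add_int_div hh hk hε hβ⟩
  obtain ⟨t, x, hpos, hle⟩ := exists_int_add_mem_Ioc p_second p_nonconst
  have abs_eq : |ε * (k ^ 2 * α - h)| = |h - k ^ 2 * α| := by
    rw [abs_mul, abs_sub_comm, (abs_eq zero_le_one).mpr hε, one_mul]
  have value_eq : x + β * (k * t : ℤ) + ε * α * (k * t : ℤ) ^ 2 + ν = x + p t := by
    simp only [p]
    push_cast
    ring
  exact ⟨x, k * t, by rwa [value_eq], by rwa [value_eq, ← abs_eq]⟩

/-- Lemma 5 (Macbeath's first lemma): let `α, β, γ` be reals with `α > 0`, `γ > 0`,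
`h` a half-integer and `k` a positive integer with `|h − k²α| + 1/2 ≤ γ`, and suppose
it is not the case that `α = h/k²` and `β ≡ h/k (mod (1/k, 2α))`. Then for every real
`ν` and each sign `ε ∈ {1, −1}` there are integers `x, y` with
`0 < x + βy + ε·α·y² + ν ≤ γ`; strict hypothesis gives strict conclusion. -/
theorem macbeath_first (α β γ h : ℝ) (k : ℤ)
    (hα : 0 < α) (hγ : 0 < γ)
    (hh : ∃ j : ℤ, 2 * h = (j : ℝ)) (hk : 0 < k)
    (hbound : |h - (k : ℝ)^2 * α| + 1/2 ≤ γ)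
    (hne : ¬ (α = h / (k : ℝ)^2 ∧
      ∃ m n : ℤ, β = h / (k : ℝ) + (m : ℝ) / (k : ℝ) + 2 * (n : ℝ) * α)) :
    (∀ ν ε : ℝ, (ε = 1 ∨ ε = -1) → ∃ x y : ℤ,
      0 < (x : ℝ) + β * (y : ℝ) + ε * α * (y : ℝ)^2 + ν ∧
      (x : ℝ) + β * (y : ℝ) + ε * α * (y : ℝ)^2 + ν ≤ γ) ∧
    (|h - (k : ℝ)^2 * α| + 1/2 < γ → ∀ ν ε : ℝ, (ε = 1 ∨ ε = -1) → ∃ x y : ℤ,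
      0 < (x : ℝ) + β * (y : ℝ) + ε * α * (y : ℝ)^2 + ν ∧
      (x : ℝ) + β * (y : ℝ) + ε * α * (y : ℝ)^2 + ν < γ) := by
  have exists_le := macbeath_first_general hh hk.ne' (α := α) (β := β)
    fun ⟨hα_eq, m, hβ_eq⟩ ↦ hne ⟨hα_eq, m, 0, by simpa using hβ_eq⟩
  exact ⟨fun ν ε hε ↦
      let ⟨x, y, hpos, hle⟩ := exists_le ν ε hε
      ⟨x, y, hpos, hle.trans hbound⟩,
    fun hlt ν ε hε ↦
      let ⟨x, y, hpos, hle⟩ := exists_le ν ε hε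
      ⟨x, y, hpos, hle.trans_lt hlt⟩⟩
end

section
/- Lemma 7: Let α, β, δ, ν and c_1, c_2 be real numbers. Suppose that δ ≥ 1/2 if c_2 ∉ ℤ, and δ ≥ 1 if c_2 ∈ ℤ. Then there exist x_1, x_2 with x_1 − c_1 ∈ ℤ and x_2 − c_2 ∈ ℤ such that 0 < (x_1 + αx_2 + ν)·x_2 + β ≤ δ. Moreover, if the corresponding inequality on δ is strict (δ > 1/2, respectively δ > 1), then x_1, x_2 can be chosen so that 0 < (x_1 + αx_2 + ν)·x_2 + β < δ. -/
/-!
Once `x₂ ≠ 0` is fixed, moving `x₁` by an integer moves the form by a multiple of `x₂`, so its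
value can be brought into `(0, |x₂|]`. It remains to take `x₂` as small as possible: the distance
from `c₂` to the nearest integer if that is nonzero, and `1` otherwise.
-/

theorem exists_add_zsmul_mem_Ioc_abs {G : Type*} [AddCommGroup G] [LinearOrder G]
    [IsOrderedAddMonoid G] [Archimedean G] {x : G} (hx : x ≠ 0) (a : G) :
    ∃ k : ℤ, a + k • x ∈ Set.Ioc 0 |x| := by
  obtain ⟨m, hm, -⟩ := existsUnique_add_zsmul_mem_Ioc (abs_pos.mpr hx) a 0
  rw [zero_add] at hm
  rcases abs_choice x with h | h
  · exact ⟨m, by rwa [h] at hm ⊢⟩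
  · exact ⟨-m, by rwa [h, zsmul_neg, ← neg_zsmul, ← h] at hm⟩

section FloorField

variable {K : Type*} [Field K] [LinearOrder K] [IsStrictOrderedRing K] [FloorRing K]

open Classical in
theorem exists_ne_zero_sub_eq_intCast_abs_le (c : K) :
    ∃ x : K, x ≠ 0 ∧ (∃ k : ℤ, x - c = k) ∧
      |x| ≤ if ∃ n : ℤ, (n : K) = c then 1 else 1 / 2 := by
  split_ifs with hc
  · obtain ⟨n, rfl⟩ := hc
    exact ⟨1, one_ne_zero, ⟨1 - n, by push_cast; rfl⟩, abs_one.le⟩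
  · exact ⟨c - round c, fun h => hc ⟨round c, (sub_eq_zero.mp h).symm⟩,
      ⟨-round c, by push_cast; ring⟩, abs_sub_round c⟩

theorem lemma7_general (f : K → K) (β δ c₁ c₂ : K)
    (h₁ : (¬ ∃ n : ℤ, (n : K) = c₂) → 1 / 2 ≤ δ)
    (h₂ : (∃ n : ℤ, (n : K) = c₂) → 1 ≤ δ) :
    (∃ x₁ x₂ : K, (∃ k : ℤ, x₁ - c₁ = k) ∧ (∃ k : ℤ, x₂ - c₂ = k) ∧
      0 < (x₁ + f x₂) * x₂ + β ∧ (x₁ + f x₂) * x₂ + β ≤ δ) ∧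
    ((((¬ ∃ n : ℤ, (n : K) = c₂) → 1 / 2 < δ) ∧ ((∃ n : ℤ, (n : K) = c₂) → 1 < δ)) →
      ∃ x₁ x₂ : K, (∃ k : ℤ, x₁ - c₁ = k) ∧ (∃ k : ℤ, x₂ - c₂ = k) ∧
        0 < (x₁ + f x₂) * x₂ + β ∧ (x₁ + f x₂) * x₂ + β < δ) := by
  obtain ⟨x₂, hx₂_ne, hx₂, hx₂_le⟩ := exists_ne_zero_sub_eq_intCast_abs_le c₂
  obtain ⟨k, hk⟩ := exists_add_zsmul_mem_Ioc_abs hx₂_ne ((c₁ + f x₂) * x₂ + β)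
  have hshift : (c₁ + f x₂) * x₂ + β + k • x₂ = (c₁ + k + f x₂) * x₂ + β := by
    rw [zsmul_eq_mul]; ring
  obtain ⟨hpos, hle⟩ := hshift ▸ hk
  have hx₁ : ∃ m : ℤ, c₁ + k - c₁ = m := ⟨k, add_sub_cancel_left c₁ _⟩
  refine ⟨⟨c₁ + k, x₂, hx₁, hx₂, hpos, (hle.trans hx₂_le).trans ?_⟩,
    fun ⟨h₁', h₂'⟩ => ⟨c₁ + k, x₂, hx₁, hx₂, hpos, (hle.trans hx₂_le).trans_lt ?_⟩⟩
  · split_ifs with hc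
    exacts [h₂ hc, h₁ hc]
  · split_ifs with hc
    exacts [h₂' hc, h₁' hc]

end FloorField

/-- Lemma 7: for reals `α, β, δ, ν, c₁, c₂` with `δ ≥ 1/2` if `c₂ ∉ ℤ` and `δ ≥ 1` if
`c₂ ∈ ℤ`, the inequality `0 < (x₁ + αx₂ + ν)x₂ + β ≤ δ` is soluble with
`xᵢ ≡ cᵢ (mod 1)`; if the corresponding inequality on `δ` is strict, the conclusion
can be made strict. -/
theorem lemma7 (α β δ ν c₁ c₂ : ℝ)
    (h₁ : (¬ ∃ n : ℤ, (n : ℝ) = c₂) → 1/2 ≤ δ)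
    (h₂ : (∃ n : ℤ, (n : ℝ) = c₂) → 1 ≤ δ) :
    (∃ x₁ x₂ : ℝ, (∃ k : ℤ, x₁ - c₁ = k) ∧ (∃ k : ℤ, x₂ - c₂ = k) ∧
      0 < (x₁ + α * x₂ + ν) * x₂ + β ∧ (x₁ + α * x₂ + ν) * x₂ + β ≤ δ) ∧
    ((((¬ ∃ n : ℤ, (n : ℝ) = c₂) → 1/2 < δ) ∧ ((∃ n : ℤ, (n : ℝ) = c₂) → 1 < δ)) →
      ∃ x₁ x₂ : ℝ, (∃ k : ℤ, x₁ - c₁ = k) ∧ (∃ k : ℤ, x₂ - c₂ = k) ∧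
        0 < (x₁ + α * x₂ + ν) * x₂ + β ∧ (x₁ + α * x₂ + ν) * x₂ + β < δ) := by
  simpa only [← add_assoc] using lemma7_general (fun y => α * y + ν) β δ c₁ c₂ h₁ h₂
end

section
/- Lemma 8: Let a > 0 and d > 0 be reals with 0 < a < d/5, let h_4, h_5, a_2, a_3, a_4, a_5 be real numbers, and let ψ(x_4, x_5) = P·x_4² + B·x_4x_5 + C·x_5² be a positive definite binary real quadratic form whose determinant PC − B²/4 equals d⁵/(2a). Then for all real numbers c_1, …, c_5 there exist x_1, …, x_5 with x_i − c_i ∈ ℤ for every i such that 0 < −a(x_3 + h_4x_4 + h_5x_5)² + (x_1 + a_2x_2 + a_3x_3 + a_4x_4 + a_5x_5)·x_2 − ψ(x_4, x_5) < d. -/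
/-!
Choose `x₂ = μ ∈ (0, 1]`. Moving `x₁` by an integer changes the expression by a multiple of `μ`, so
after division by `μ` and completion of the square the task is to hit, modulo one, every window of
length `d / μ` with the values of a translate of the positive definite ternary form
`a (x₃ + h₄ x₄ + h₅ x₅)² + ψ(x₄, x₅)`. Since `μ ≤ 1`, rescaling preserves the hypotheses.

Reducing `ψ` by `SL(2, ℤ)`, the ternary form becomes a sum of three squares, each centred at a point
depending on the variables to its right, with coefficients `a`, `Q`, `K` where `2 a Q K ≤ d⁵` and
`3 Q ≤ 4 K`. One square of coefficient `α ≤ L` turns a target window of length `L` into an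
interval of admissible window positions, of length at least `L² / (4 α) + L / 2`. Feeding that
interval to the next square as its window, after at most three steps we reach a length above `1`,
which is all that is needed modulo one.
-/

open Set

section Windows

variable {κ κ' : Type*}

/-- Every window `(τ, τ + L)` whose position `τ` lies in `(A, A + M)` contains a value of `f`.
Naming the left endpoint `A` makes it possible to ask for the same interval of positions for all
members of a family of functions. -/
def HitsWindows (f : κ → ℝ) (A L M : ℝ) : Prop :=
  ∀ τ ∈ Ioo A (A + M), ∃ k, f k ∈ Ioo τ (τ + L)

/-- Every open window of length `L` contains a value of `f` up to translation by an integer. -/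
def CoversModOne (f : κ → ℝ) (L : ℝ) : Prop :=
  ∀ τ : ℝ, ∃ k, ∃ N : ℤ, f k ∈ Ioo (τ + N) (τ + N + L)

lemma HitsWindows.fiberwise_add {f : κ' → κ → ℝ} {g : κ' → ℝ} {A A' L M M' : ℝ}
    (hf : ∀ k', HitsWindows (f k') A L M) (hg : HitsWindows g A' M M') :
    HitsWindows (fun x : κ' × κ ↦ g x.1 + f x.1 x.2) (A' + A + M) L M' := by
  rintro τ ⟨hτ, hτ'⟩
  obtain ⟨k', hk', hk''⟩ := hg (τ - A - M) ⟨by linarith, by linarith⟩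
  obtain ⟨k, hk⟩ := hf k' (τ - g k') ⟨by linarith, by linarith⟩
  exact ⟨(k', k), by linarith [hk.1], by linarith [hk.2]⟩

lemma HitsWindows.coversModOne {f : κ → ℝ} {A L M : ℝ} (hf : HitsWindows f A L M) (hM : 1 < M) :
    CoversModOne f L := by
  intro τ
  obtain ⟨N, ⟨hN, hN'⟩, -⟩ := existsUnique_add_zsmul_mem_Ioc one_pos τ A
  rw [zsmul_one] at hN hN'
  obtain ⟨k, hk⟩ := hf (τ + N) ⟨hN, by linarith⟩
  exact ⟨k, N, hk⟩

lemma CoversModOne.fiberwise_add {f : κ' → κ → ℝ} {L : ℝ} {k' : κ'} (hf : CoversModOne (f k') L)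
    (g : κ' → ℝ) : CoversModOne (fun x : κ' × κ ↦ g x.1 + f x.1 x.2) L := by
  intro τ
  obtain ⟨k, N, hk, hk'⟩ := hf (τ - g k')
  exact ⟨(k', k), N, by linarith, by linarith⟩

lemma CoversModOne.of_range_subset {f : κ → ℝ} {g : κ' → ℝ} {L : ℝ} (hf : CoversModOne f L)
    (h : range f ⊆ range g) : CoversModOne g L := by
  intro τ
  obtain ⟨k, N, hk⟩ := hf τ
  obtain ⟨k', hk'⟩ := h (mem_range_self k)
  exact ⟨k', N, hk' ▸ hk⟩

lemma CoversModOne.sub_const {f : κ → ℝ} {L : ℝ} (hf : CoversModOne f L) (b : ℝ) :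
    CoversModOne (fun k ↦ f k - b) L := by
  intro τ
  obtain ⟨k, N, hk, hk'⟩ := hf (τ + b)
  exact ⟨k, N, by linarith, by linarith⟩

lemma CoversModOne.exists_mem_Ioo_sub {f : κ → ℝ} {L : ℝ} (hf : CoversModOne f L) (b : ℝ) :
    ∃ k, ∃ N : ℤ, f k ∈ Ioo (b + N - L) (b + N) := by
  obtain ⟨k, N, hk, hk'⟩ := hf (b - L)
  exact ⟨k, N, by linarith, by linarith⟩

end Windows

section Parabola

/-- The values at the integers of the parabola `α x²` translated by `v`. -/
def parabola (α v : ℝ) (n : ℤ) : ℝ := α * (n + v) ^ 2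

/-- For `0 < α ≤ L`, the length of an interval of positions `τ` for which every translate of the
parabola `α x²` hits the window `(τ, τ + L)`, see `hitsWindows_parabola`. -/
noncomputable def windowGain (α L : ℝ) : ℝ := L ^ 2 / (4 * α) + L / 2

lemma four_mul_mul_windowGain {α : ℝ} (hα : α ≠ 0) (L : ℝ) :
    4 * α * windowGain α L = L ^ 2 + 2 * α * L := by
  rw [windowGain]
  field_simp
  ring

lemma exists_sq_int_add_eq (v : ℝ) :
    ∃ w ∈ Icc (-1 / 2 : ℝ) 0, ∀ j : ℤ, ∃ n : ℤ, ((n : ℝ) + v) ^ 2 = (j + w) ^ 2 := by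
  have hround := abs_sub_round v
  refine ⟨-|v - round v|, ⟨by linarith, by simp⟩, fun j ↦ ?_⟩
  rcases abs_choice (v - round v) with h | h <;> rw [h]
  · exact ⟨-j - round v, by push_cast; ring⟩
  · exact ⟨j - round v, by push_cast; ring⟩

lemma exists_parabola_mem_Ioo_of_neg {α L τ : ℝ} (hα : 0 < α) (hτ : τ ∈ Ioo (α / 4 - L) 0) (v : ℝ) :
    ∃ n, parabola α v n ∈ Ioo τ (τ + L) := by
  obtain ⟨w, ⟨hw, hw'⟩, hsq⟩ := exists_sq_int_add_eq v
  obtain ⟨n, hn⟩ := hsq 0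
  have hw2 : w ^ 2 ≤ 1 / 4 := by nlinarith
  rw [Int.cast_zero, zero_add] at hn
  refine ⟨n, ?_, ?_⟩ <;> rw [parabola, hn]
  · exact hτ.2.trans_le (by positivity)
  · nlinarith [hτ.1]

lemma hitsWindows_parabola {α L : ℝ} (hα : 0 < α) (hL : α ≤ L) (v : ℝ) :
    HitsWindows (parabola α v) (α / 4 - L) L (windowGain α L) := by
  rintro τ ⟨hτ, hτ'⟩
  rcases lt_or_ge τ 0 with hneg | hnonneg
  · exact exists_parabola_mem_Ioo_of_neg hα ⟨hτ, hneg⟩ v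
  obtain ⟨s, hs, rfl⟩ : ∃ s : ℝ, 0 ≤ s ∧ α * s ^ 2 = τ :=
    ⟨√(τ / α), Real.sqrt_nonneg _, by rw [Real.sq_sqrt (by positivity)]; field_simp⟩
  have hgap : 2 * α * s < L - α := by
    have hend : 4 * α * (α / 4 - L + windowGain α L) = (L - α) ^ 2 := by
      rw [mul_add, four_mul_mul_windowGain hα.ne']
      ring
    exact lt_of_pow_lt_pow_left₀ 2 (by linarith) (by nlinarith)
  obtain ⟨n, ⟨hn, hn'⟩, -⟩ := existsUnique_add_zsmul_mem_Ioc one_pos v s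
  rw [zsmul_one] at hn hn'
  refine ⟨n, ?_, ?_⟩ <;> rw [parabola, add_comm (n : ℝ)]
  · gcongr
  · calc α * (v + n) ^ 2 ≤ α * (s + 1) ^ 2 := by gcongr; linarith
      _ = α * s ^ 2 + (2 * α * s + α) := by ring
      _ < α * s ^ 2 + L := by linarith

lemma exists_mem_Ioo_of_forall_lt_add {x : ℕ → ℝ} {τ L : ℝ} (h0 : x 0 < τ + L) {k : ℕ}
    (hstep : ∀ j < k, x (j + 1) < x j + L) (hk : τ < x k) : ∃ j, x j ∈ Ioo τ (τ + L) := by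
  induction k with
  | zero => exact ⟨0, hk, h0⟩
  | succ k ih =>
    rcases lt_or_ge τ (x k) with h | h
    · exact ih (fun j hj ↦ hstep j (hj.trans k.lt_succ_self)) h
    · exact ⟨k + 1, hk, by linarith [hstep k k.lt_succ_self]⟩

/-- For `5 α < L < 6 α` the gain `L + 6 α` exceeds `windowGain α L`: the parabola is symmetric, so
its values can be listed as `α (j + w)²` for `j = 0, 1, 2, 3, …` with `-1/2 ≤ w ≤ 0`, and the first
three gaps are at most `5 α`. -/
lemma hitsWindows_parabola_of_five_mul_lt {α L : ℝ} (hα : 0 < α) (hL : 5 * α < L) (v : ℝ) :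
    HitsWindows (parabola α v) (α / 4 - L) L (L + 6 * α) := by
  rintro τ ⟨hτ, hτ'⟩
  obtain ⟨w, ⟨hw, hw'⟩, hsq⟩ := exists_sq_int_add_eq v
  obtain ⟨j, hj⟩ : ∃ j : ℕ, α * ((j : ℝ) + w) ^ 2 ∈ Ioo τ (τ + L) := by
    refine exists_mem_Ioo_of_forall_lt_add (x := fun j ↦ α * ((j : ℝ) + w) ^ 2) (k := 3)
      ?_ (fun j hj ↦ ?_) ?_
    · have hw2 : w ^ 2 ≤ 1 / 4 := by nlinarith
      simp only [Nat.cast_zero, zero_add]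
      nlinarith
    · have hj2 : (j : ℝ) ≤ 2 := by exact_mod_cast Nat.lt_succ_iff.mp hj
      have hgap : ((j + 1 : ℕ) + w) ^ 2 ≤ (j + w) ^ 2 + 5 := by push_cast; nlinarith
      nlinarith
    · have hw2 : 25 / 4 ≤ (3 + w) ^ 2 := by nlinarith
      simp only [Nat.cast_ofNat]
      nlinarith
  obtain ⟨n, hn⟩ := hsq j
  exact ⟨n, by rwa [parabola, hn]⟩

lemma exists_gain_parabola {a d : ℝ} (ha : 0 < a) (had : 5 * a < d) :
    ∃ u > 0, (∀ v, HitsWindows (parabola a v) (a / 4 - d) d u) ∧ 8 * d ^ 5 ≤ 3 * a * u ^ 4 := by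
  have hd : 0 < d := by linarith
  rcases le_total d (6 * a) with h | h
  · refine ⟨d + 6 * a, by positivity, hitsWindows_parabola_of_five_mul_lt ha had, ?_⟩
    calc 8 * d ^ 5 = 8 * d ^ 4 * d := by ring
      _ ≤ 8 * d ^ 4 * (6 * a) := by gcongr
      _ = 3 * a * (d + d) ^ 4 := by ring
      _ ≤ 3 * a * (d + 6 * a) ^ 4 := by gcongr
  · refine ⟨windowGain a d, by rw [windowGain]; positivity,
      hitsWindows_parabola ha (by linarith), ?_⟩
    have hgain : windowGain a d = d * (d + 2 * a) / (4 * a) := by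
      rw [eq_div_iff (by positivity), mul_comm, four_mul_mul_windowGain ha.ne']
      ring
    have hquartic : 2048 * a ^ 3 * d ≤ 3 * (d + 2 * a) ^ 4 := by
      have hsq : (8 * a) ^ 2 ≤ (d + 2 * a) ^ 2 := by gcongr; linarith
      have hfactor : 0 ≤ (3 * d - 2 * a) * (d - 6 * a) :=
        mul_nonneg (by linarith) (by linarith)
      calc 2048 * a ^ 3 * d
          ≤ 2048 * a ^ 3 * d + 64 * a ^ 2 * ((3 * d - 2 * a) * (d - 6 * a)) :=
            le_add_of_nonneg_right (by positivity)
        _ = 3 * ((8 * a) ^ 2 * (d + 2 * a) ^ 2) := by ring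
        _ ≤ 3 * ((d + 2 * a) ^ 2 * (d + 2 * a) ^ 2) := by gcongr
        _ = 3 * (d + 2 * a) ^ 4 := by ring
    rw [hgain, div_pow, mul_div_assoc', le_div_iff₀ (by positivity)]
    calc 8 * d ^ 5 * (4 * a) ^ 4 = a * d ^ 4 * (2048 * a ^ 3 * d) := by ring
      _ ≤ a * d ^ 4 * (3 * (d + 2 * a) ^ 4) := by gcongr
      _ = 3 * a * (d * (d + 2 * a)) ^ 4 := by ring

end Parabola

section Diagonal

lemma le_sq_div_two_of_reduced {Q K u : ℝ} (hQ : 0 < Q) (hQK : 3 * Q ≤ 4 * K)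
    (hu : 16 * (Q * K) ≤ 3 * u ^ 4) : Q ≤ u ^ 2 / 2 := by
  refine le_of_sq_le_sq ?_ (by positivity)
  nlinarith

lemma le_windowGain_of_sixteen_mul_le {Q K u : ℝ} (hQ : 0 < Q) (hu0 : 0 < u) (hu1 : u ≤ 1)
    (hu : 16 * (Q * K) ≤ 3 * u ^ 4) : K ≤ windowGain Q u := by
  have hu4 : u ^ 4 ≤ u ^ 2 := pow_le_pow_of_le_one hu0.le hu1 (by norm_num)
  refine le_of_mul_le_mul_left ?_ (by positivity : 0 < 4 * Q)
  rw [four_mul_mul_windowGain hQ.ne']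
  nlinarith [mul_pos hQ hu0]

lemma one_lt_windowGain_windowGain {Q K u : ℝ} (hQ : 0 < Q) (hK : 0 < K) (hu0 : 0 < u)
    (hQu : Q ≤ u ^ 2 / 2) (hu : 16 * (Q * K) ≤ 3 * u ^ 4) :
    1 < windowGain K (windowGain Q u) := by
  set M := windowGain Q u
  have hQM : 4 * Q * M = u ^ 2 + 2 * Q * u := four_mul_mul_windowGain hQ.ne' u
  have hM1 : (1 + u) / 2 ≤ M := by
    refine le_of_mul_le_mul_left ?_ (by positivity : 0 < 4 * Q)
    nlinarith
  have hamgm : u ^ 3 ≤ 2 * Q * M ^ 2 := by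
    have : Q * (8 * u ^ 3) ≤ Q * (8 * (2 * Q * M ^ 2)) := by
      calc Q * (8 * u ^ 3) = 4 * u ^ 2 * (2 * Q * u) := by ring
        _ ≤ (u ^ 2 + 2 * Q * u) ^ 2 := four_mul_le_sq_add _ _
        _ = Q * (8 * (2 * Q * M ^ 2)) := by rw [← hQM]; ring
    linarith [le_of_mul_le_mul_left this hQ]
  have hKM : 8 * K ≤ 3 * u * M ^ 2 := by
    refine le_of_mul_le_mul_left ?_ hQ
    nlinarith
  calc 1 < 2 / (3 * u) + (1 + u) / 4 := by
        rw [← sub_lt_iff_lt_add, lt_div_iff₀ (by positivity)]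
        nlinarith [sq_nonneg (u - 1)]
    _ ≤ M ^ 2 / (4 * K) + M / 2 := by
        refine add_le_add ?_ (by linarith)
        rw [div_le_div_iff₀ (by positivity) (by positivity)]
        linarith

lemma coversModOne_diagonal {a d Q K : ℝ} (ha : 0 < a) (had : 5 * a < d) (hQ : 0 < Q)
    (hQK : 3 * Q ≤ 4 * K) (hdet : 2 * a * (Q * K) ≤ d ^ 5)
    (v₁ : ℤ → ℤ → ℝ) (v₂ : ℤ → ℝ) (v₃ : ℝ) :
    CoversModOne (fun x : ℤ × ℤ × ℤ ↦ parabola K v₃ x.1 +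
      (parabola Q (v₂ x.1) x.2.1 + parabola a (v₁ x.1 x.2.1) x.2.2)) d := by
  obtain ⟨u, hu0, hau, hdu⟩ := exists_gain_parabola ha had
  have hu : 16 * (Q * K) ≤ 3 * u ^ 4 := by
    refine le_of_mul_le_mul_left ?_ ha
    linarith
  rcases lt_or_ge 1 u with hu1 | hu1
  · exact (((hau (v₁ 0 0)).coversModOne hu1).fiberwise_add (f := fun m n ↦ parabola a (v₁ 0 m) n)
      (parabola Q (v₂ 0))).fiberwise_add (f := fun l (x : ℤ × ℤ) ↦
        parabola Q (v₂ l) x.1 + parabola a (v₁ l x.1) x.2) _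
  have hQu : Q ≤ u ^ 2 / 2 := le_sq_div_two_of_reduced hQ hQK hu
  have hQa (l : ℤ) : HitsWindows
      (fun x : ℤ × ℤ ↦ parabola Q (v₂ l) x.1 + parabola a (v₁ l x.1) x.2)
      (Q / 4 - u + (a / 4 - d) + u) d (windowGain Q u) :=
    HitsWindows.fiberwise_add (fun m ↦ hau (v₁ l m))
      (hitsWindows_parabola hQ (by nlinarith) (v₂ l))
  have hK : 0 < K := by linarith
  exact (HitsWindows.fiberwise_add hQa
    (hitsWindows_parabola hK (le_windowGain_of_sixteen_mul_le hQ hu0 hu1 hu) v₃)).coversModOne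
    (one_lt_windowGain_windowGain hQ hK hu0 hQu hu)

end Diagonal

section Forms

open UpperHalfPlane

/-- The binary quadratic form `ψ(x, y) = P x² + B x y + C y²`. -/
def binaryForm (P B C x y : ℝ) : ℝ := P * x ^ 2 + B * x * y + C * y ^ 2

/-- The ternary form `a (x₃ + h₄ x₄ + h₅ x₅)² + ψ(x₄, x₅)`, the negative of the part of a
Birch-reduced form of type `(1, 4)` that does not involve `x₂`. -/
def ternaryForm (a h₄ h₅ P B C x₃ x₄ x₅ : ℝ) : ℝ :=
  a * (x₃ + h₄ * x₄ + h₅ * x₅) ^ 2 + binaryForm P B C x₄ x₅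

variable {P B C : ℝ}

lemma pos_and_det_pos_of_binaryForm_pos
    (h : ∀ x y : ℝ, ¬(x = 0 ∧ y = 0) → 0 < binaryForm P B C x y) :
    0 < P ∧ 0 < P * C - B ^ 2 / 4 := by
  have hP : 0 < P := by simpa [binaryForm] using h 1 0 (by simp)
  have hvertex := h (B / 2) (-P) (by simp [hP.ne'])
  have heq : binaryForm P B C (B / 2) (-P) = P * (P * C - B ^ 2 / 4) := by
    rw [binaryForm]
    ring
  exact ⟨hP, pos_of_mul_pos_right (heq ▸ hvertex) hP.le⟩

lemma mul_binaryForm_eq (P B C x y : ℝ) :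
    P * binaryForm P B C x y = (P * x + B / 2 * y) ^ 2 + (P * C - B ^ 2 / 4) * y ^ 2 := by
  rw [binaryForm]
  ring

lemma binaryForm_eq_mul_normSq (hP : P ≠ 0) {z : ℂ} (hre : 2 * P * z.re = B)
    (him : (P * z.im) ^ 2 = P * C - B ^ 2 / 4) (x y : ℝ) :
    binaryForm P B C x y = P * Complex.normSq (y * z + x) := by
  refine mul_left_cancel₀ hP ?_
  rw [mul_binaryForm_eq, ← him, ← hre, Complex.normSq_apply]
  simp only [Complex.add_re, Complex.add_im, Complex.re_ofReal_mul, Complex.im_ofReal_mul,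
    Complex.ofReal_re, Complex.ofReal_im]
  ring

lemma binaryForm_pos (hP : 0 < P) (hD : 0 < P * C - B ^ 2 / 4) {x y : ℝ}
    (hxy : ¬(x = 0 ∧ y = 0)) : 0 < binaryForm P B C x y := by
  refine pos_of_mul_pos_right (mul_binaryForm_eq P B C x y ▸ ?_) hP.le
  rcases eq_or_ne y 0 with rfl | hy
  · have hx : x ≠ 0 := fun hx ↦ hxy ⟨hx, rfl⟩
    simp only [mul_zero, add_zero]
    positivity
  · positivity

/-- Write `ψ(x, y) = P |x + y z|²` with `z` in the upper half plane; the pair `(p, q)` comes from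
the bottom row of an element of `SL(2, ℤ)` moving `z` into the standard fundamental domain. -/
lemma exists_unimodular_three_mul_sq_binaryForm_le (hP : 0 < P) (hD : 0 < P * C - B ^ 2 / 4) :
    ∃ p q r s : ℤ, p * s - q * r = 1 ∧
      3 * binaryForm P B C p q ^ 2 ≤ 4 * (P * C - B ^ 2 / 4) := by
  set D := P * C - B ^ 2 / 4
  let z : ℍ := ⟨⟨B / (2 * P), √D / P⟩, by positivity⟩
  obtain ⟨g, hg⟩ := ModularGroup.exists_smul_mem_fd z
  refine ⟨g 1 1, g 1 0, g 0 1, g 0 0, ?_, ?_⟩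
  · linarith [Matrix.det_fin_two g.1, g.2]
  have hform : binaryForm P B C (g 1 1) (g 1 0) = P * Complex.normSq (denom g z) := by
    have hre : 2 * P * (z : ℂ).re = B := mul_div_cancel₀ B (by positivity)
    have him : P * (z : ℂ).im = √D := mul_div_cancel₀ (√D) hP.ne'
    rw [ModularGroup.denom_apply]
    exact_mod_cast binaryForm_eq_mul_normSq hP.ne' hre
      (by rw [him, Real.sq_sqrt hD.le]) (g 1 1) (g 1 0)
  have him : (g • z).im * binaryForm P B C (g 1 1) (g 1 0) = √D := by
    have hdenom : Complex.normSq (denom g z) ≠ 0 := (normSq_denom_pos g z.im_ne_zero).ne'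
    have hz : z.im = √D / P := rfl
    rw [hform, ModularGroup.im_smul_eq_div_normSq, hz]
    field_simp
  calc 3 * binaryForm P B C (g 1 1) (g 1 0) ^ 2
      ≤ 4 * (g • z).im ^ 2 * binaryForm P B C (g 1 1) (g 1 0) ^ 2 := by
        gcongr
        exact ModularGroup.three_le_four_mul_im_sq_of_mem_fd hg
    _ = 4 * ((g • z).im * binaryForm P B C (g 1 1) (g 1 0)) ^ 2 := by ring
    _ = 4 * D := by rw [him, Real.sq_sqrt hD.le]

lemma binaryForm_unimodular_eq {p q r s : ℝ} (hdet : p * s - q * r = 1)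
    (hQ : binaryForm P B C p q ≠ 0) : ∃ β : ℝ, ∀ x y : ℝ,
      binaryForm P B C (p * x + r * y) (q * x + s * y) =
        binaryForm P B C p q * (x + β * y) ^ 2 +
          (P * C - B ^ 2 / 4) / binaryForm P B C p q * y ^ 2 := by
  refine ⟨(P * p * r + B / 2 * (p * s + q * r) + C * q * s) / binaryForm P B C p q,
    fun x y ↦ ?_⟩
  have hdisc : P * C - B ^ 2 / 4 = binaryForm P B C p q * binaryForm P B C r s -
      (P * p * r + B / 2 * (p * s + q * r) + C * q * s) ^ 2 := by
    rw [binaryForm, binaryForm]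
    linear_combination -(P * C - B ^ 2 / 4) * (p * s - q * r + 1) * hdet
  rw [hdisc]
  field_simp
  simp only [binaryForm]
  ring

lemma exists_reduced_diagonalization (hP : 0 < P) (hD : 0 < P * C - B ^ 2 / 4) :
    ∃ (p q r s : ℤ) (Q K β : ℝ), p * s - q * r = 1 ∧ 0 < Q ∧ 3 * Q ≤ 4 * K ∧
      Q * K = P * C - B ^ 2 / 4 ∧ ∀ x y : ℝ,
        binaryForm P B C (p * x + r * y) (q * x + s * y) = Q * (x + β * y) ^ 2 + K * y ^ 2 := by
  obtain ⟨p, q, r, s, hpqrs, hmin⟩ := exists_unimodular_three_mul_sq_binaryForm_le hP hD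
  have hdet : (p * s - q * r : ℝ) = 1 := by exact_mod_cast hpqrs
  have hQ : 0 < binaryForm P B C p q := by
    refine binaryForm_pos hP hD fun ⟨hp, hq⟩ ↦ ?_
    simp [hp, hq] at hdet
  obtain ⟨β, hβ⟩ := binaryForm_unimodular_eq hdet hQ.ne'
  refine ⟨p, q, r, s, _, _, β, hpqrs, hQ, ?_, mul_div_cancel₀ _ hQ.ne', hβ⟩
  rw [mul_div_assoc', le_div_iff₀ hQ]
  linarith

lemma coversModOne_ternaryForm {a d : ℝ} (ha : 0 < a) (had : 5 * a < d) (hP : 0 < P)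
    (hD : 0 < P * C - B ^ 2 / 4) (hdet : 2 * a * (P * C - B ^ 2 / 4) ≤ d ^ 5)
    (h₄ h₅ c₃ c₄ c₅ : ℝ) :
    CoversModOne (fun x : ℤ × ℤ × ℤ ↦
      ternaryForm a h₄ h₅ P B C (c₃ + x.1) (c₄ + x.2.1) (c₅ + x.2.2)) d := by
  obtain ⟨p, q, r, s, Q, K, β, hpqrs, hQ, hQK, hQKdet, hdiag⟩ :=
    exists_reduced_diagonalization hP hD
  have hpqrs' : (p * s - q * r : ℝ) = 1 := by exact_mod_cast hpqrs
  let m₀ := s * c₄ - r * c₅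
  let l₀ := p * c₅ - q * c₄
  have hcov := coversModOne_diagonal ha had hQ hQK (hQKdet ▸ hdet)
    (fun l m ↦ c₃ + h₄ * (c₄ + (p * m + r * l)) + h₅ * (c₅ + (q * m + s * l)))
    (fun l ↦ m₀ + β * (l + l₀)) l₀
  refine hcov.of_range_subset ?_
  rintro _ ⟨⟨l, m, n⟩, rfl⟩
  refine ⟨(n, p * m + r * l, q * m + s * l), ?_⟩
  have hx₄ : c₄ + (p * m + r * l) = p * (m + m₀) + r * (l + l₀) := by
    linear_combination -c₄ * hpqrs'
  have hx₅ : c₅ + (q * m + s * l) = q * (m + m₀) + s * (l + l₀) := by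
    linear_combination -c₅ * hpqrs'
  have hψ := hdiag (m + m₀) (l + l₀)
  rw [← hx₄, ← hx₅] at hψ
  simp only [ternaryForm, parabola]
  push_cast
  rw [hψ]
  ring

lemma exists_binaryForm_sub_linear_eq (hD : P * C - B ^ 2 / 4 ≠ 0) (k₄ k₅ : ℝ) :
    ∃ e₄ e₅ b : ℝ, ∀ x y : ℝ, binaryForm P B C x y - (k₄ * x + k₅ * y) =
      binaryForm P B C (x - e₄) (y - e₅) - b := by
  let D := P * C - B ^ 2 / 4
  have hD' : D ≠ 0 := hD
  let e₄ := (2 * C * k₄ - B * k₅) / (4 * D)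
  let e₅ := (2 * P * k₅ - B * k₄) / (4 * D)
  have hgrad₄ : 2 * P * e₄ + B * e₅ = k₄ := by
    simp only [e₄, e₅]
    field_simp
    simp only [D]
    ring
  have hgrad₅ : B * e₄ + 2 * C * e₅ = k₅ := by
    simp only [e₄, e₅]
    field_simp
    simp only [D]
    ring
  refine ⟨e₄, e₅, binaryForm P B C e₄ e₅, fun x y ↦ ?_⟩
  rw [← hgrad₄, ← hgrad₅]
  simp only [binaryForm]
  ring

lemma exists_ternaryForm_sub_linear_eq {a : ℝ} (ha : a ≠ 0) (hD : P * C - B ^ 2 / 4 ≠ 0)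
    (h₄ h₅ k₃ k₄ k₅ : ℝ) :
    ∃ e₃ e₄ e₅ b : ℝ, ∀ x₃ x₄ x₅ : ℝ,
      ternaryForm a h₄ h₅ P B C x₃ x₄ x₅ - (k₃ * x₃ + k₄ * x₄ + k₅ * x₅) =
        ternaryForm a h₄ h₅ P B C (x₃ - e₃) (x₄ - e₄) (x₅ - e₅) - b := by
  obtain ⟨e₄, e₅, b, hb⟩ := exists_binaryForm_sub_linear_eq hD (k₄ - k₃ * h₄) (k₅ - k₃ * h₅)
  refine ⟨k₃ / (2 * a) - h₄ * e₄ - h₅ * e₅, e₄, e₅, b + k₃ ^ 2 / (4 * a), fun x₃ x₄ x₅ ↦ ?_⟩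
  have hsq : a * (x₃ - (k₃ / (2 * a) - h₄ * e₄ - h₅ * e₅) + h₄ * (x₄ - e₄) + h₅ * (x₅ - e₅)) ^ 2 =
      a * (x₃ + h₄ * x₄ + h₅ * x₅) ^ 2 - k₃ * (x₃ + h₄ * x₄ + h₅ * x₅) + k₃ ^ 2 / (4 * a) := by
    field_simp
    ring
  rw [ternaryForm, ternaryForm, hsq]
  linear_combination hb x₄ x₅

lemma coversModOne_ternaryForm_sub_linear {a d : ℝ} (ha : 0 < a) (had : 5 * a < d) (hP : 0 < P)
    (hD : 0 < P * C - B ^ 2 / 4) (hdet : 2 * a * (P * C - B ^ 2 / 4) ≤ d ^ 5)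
    (h₄ h₅ k₃ k₄ k₅ c₃ c₄ c₅ : ℝ) :
    CoversModOne (fun x : ℤ × ℤ × ℤ ↦
      ternaryForm a h₄ h₅ P B C (c₃ + x.1) (c₄ + x.2.1) (c₅ + x.2.2) -
        (k₃ * (c₃ + x.1) + k₄ * (c₄ + x.2.1) + k₅ * (c₅ + x.2.2))) d := by
  obtain ⟨e₃, e₄, e₅, b, hb⟩ :=
    exists_ternaryForm_sub_linear_eq ha.ne' hD.ne' h₄ h₅ k₃ k₄ k₅
  simp only [hb, add_sub_right_comm]
  exact (coversModOne_ternaryForm ha had hP hD hdet h₄ h₅ _ _ _).sub_const b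

lemma ternaryForm_div (a h₄ h₅ P B C μ x₃ x₄ x₅ : ℝ) :
    ternaryForm (a / μ) h₄ h₅ (P / μ) (B / μ) (C / μ) x₃ x₄ x₅ =
      ternaryForm a h₄ h₅ P B C x₃ x₄ x₅ / μ := by
  simp only [ternaryForm, binaryForm]
  ring

end Forms

section Main

variable {a d P B C : ℝ}

lemma coversModOne_ternaryForm_div_sub_linear {μ : ℝ} (ha : 0 < a) (had : 5 * a < d) (hP : 0 < P)
    (hD : 0 < P * C - B ^ 2 / 4) (hdet : 2 * a * (P * C - B ^ 2 / 4) ≤ d ^ 5)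
    (hμ : μ ∈ Ioc (0 : ℝ) 1) (h₄ h₅ k₃ k₄ k₅ c₃ c₄ c₅ : ℝ) :
    CoversModOne (fun x : ℤ × ℤ × ℤ ↦
      ternaryForm a h₄ h₅ P B C (c₃ + x.1) (c₄ + x.2.1) (c₅ + x.2.2) / μ -
        (k₃ * (c₃ + x.1) + k₄ * (c₄ + x.2.1) + k₅ * (c₅ + x.2.2))) (d / μ) := by
  obtain ⟨hμ0, hμ1⟩ := hμ
  have hd : 0 < d := by linarith
  have hdet_div : P / μ * (C / μ) - (B / μ) ^ 2 / 4 = (P * C - B ^ 2 / 4) / μ ^ 2 := by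
    field_simp
  simp only [← ternaryForm_div]
  refine coversModOne_ternaryForm_sub_linear (by positivity) ?_ (by positivity)
    (by rw [hdet_div]; positivity) ?_ h₄ h₅ k₃ k₄ k₅ c₃ c₄ c₅
  · rw [mul_div_assoc']
    gcongr
  · calc 2 * (a / μ) * (P / μ * (C / μ) - (B / μ) ^ 2 / 4)
        = 2 * a * (P * C - B ^ 2 / 4) / μ ^ 3 := by rw [hdet_div]; field_simp
      _ ≤ d ^ 5 / μ ^ 3 := by gcongr
      _ ≤ d ^ 5 / μ ^ 5 := by
        have hpow : μ ^ 5 ≤ μ ^ 3 := pow_le_pow_of_le_one hμ0.le hμ1 (by norm_num)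
        gcongr
      _ = (d / μ) ^ 5 := (div_pow d μ 5).symm

lemma mul_sub_mem_Ioo_of_div_sub_mem_Ioo {T Λ b μ : ℝ} (hμ : 0 < μ)
    (h : T / μ - Λ ∈ Ioo (b - d / μ) b) : (b + Λ) * μ - T ∈ Ioo 0 d := by
  obtain ⟨hlower, hupper⟩ := h
  rw [sub_lt_iff_lt_add, div_lt_iff₀ hμ] at hupper
  rw [lt_sub_iff_add_lt, sub_add_eq_add_sub, sub_lt_iff_lt_add, ← add_div, lt_div_iff₀ hμ] at hlower
  exact ⟨by linarith, by linarith⟩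

theorem lemma8_general (h₄ h₅ a₂ a₃ a₄ a₅ : ℝ) (ha : 0 < a) (had : a < d / 5)
    (hposdef : ∀ u v : ℝ, ¬(u = 0 ∧ v = 0) → 0 < P * u ^ 2 + B * u * v + C * v ^ 2)
    (hdet : P * C - B ^ 2 / 4 ≤ d ^ 5 / (2 * a)) (c₁ c₂ c₃ c₄ c₅ : ℝ) :
    ∃ x₁ x₂ x₃ x₄ x₅ : ℝ,
      (∃ k : ℤ, x₁ - c₁ = k) ∧ (∃ k : ℤ, x₂ - c₂ = k) ∧ (∃ k : ℤ, x₃ - c₃ = k) ∧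
      (∃ k : ℤ, x₄ - c₄ = k) ∧ (∃ k : ℤ, x₅ - c₅ = k) ∧
      0 < -a * (x₃ + h₄ * x₄ + h₅ * x₅) ^ 2 +
            (x₁ + a₂ * x₂ + a₃ * x₃ + a₄ * x₄ + a₅ * x₅) * x₂
            - (P * x₄ ^ 2 + B * x₄ * x₅ + C * x₅ ^ 2) ∧
      -a * (x₃ + h₄ * x₄ + h₅ * x₅) ^ 2 +
            (x₁ + a₂ * x₂ + a₃ * x₃ + a₄ * x₄ + a₅ * x₅) * x₂
            - (P * x₄ ^ 2 + B * x₄ * x₅ + C * x₅ ^ 2) < d := by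
  obtain ⟨hP, hD⟩ := pos_and_det_pos_of_binaryForm_pos hposdef
  obtain ⟨k, ⟨hμ0, hμ1⟩, -⟩ := existsUnique_add_zsmul_mem_Ioc one_pos c₂ 0
  rw [zsmul_one] at hμ0 hμ1
  set μ := c₂ + k with hμ
  rw [le_div_iff₀' (by positivity)] at hdet
  obtain ⟨⟨n, i, j⟩, N, hwindow⟩ := (coversModOne_ternaryForm_div_sub_linear ha (by linarith)
    hP hD hdet ⟨hμ0, by linarith⟩ h₄ h₅ a₃ a₄ a₅ c₃ c₄ c₅).exists_mem_Ioo_sub (c₁ + a₂ * μ)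
  obtain ⟨hpos, hlt⟩ := mul_sub_mem_Ioo_of_div_sub_mem_Ioo hμ0 hwindow
  simp only [ternaryForm, binaryForm] at hpos hlt
  refine ⟨c₁ + N, μ, c₃ + n, c₄ + i, c₅ + j, ⟨N, by ring⟩, ⟨k, by rw [hμ]; ring⟩,
    ⟨n, by ring⟩, ⟨i, by ring⟩, ⟨j, by ring⟩, by linarith, by linarith⟩

end Main

/-- Lemma 8: if `0 < a < d/5` and `ψ(x₄,x₅) = P·x₄² + B·x₄x₅ + C·x₅²` is a positive
definite binary form of determinant `PC − B²/4 = d⁵/(2a)`, then for all reals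
`c₁,…,c₅` the inequality
`0 < −a(x₃+h₄x₄+h₅x₅)² + (x₁+a₂x₂+a₃x₃+a₄x₄+a₅x₅)x₂ − ψ(x₄,x₅) < d`
is soluble with `xᵢ ≡ cᵢ (mod 1)`. -/
theorem lemma8 (a d h₄ h₅ a₂ a₃ a₄ a₅ P B C : ℝ)
    (ha : 0 < a) (hd : 0 < d) (had : a < d / 5)
    (hposdef : ∀ u v : ℝ, ¬(u = 0 ∧ v = 0) → 0 < P * u^2 + B * u * v + C * v^2)
    (hdet : P * C - B^2 / 4 = d^5 / (2 * a))
    (c₁ c₂ c₃ c₄ c₅ : ℝ) :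
    ∃ x₁ x₂ x₃ x₄ x₅ : ℝ,
      (∃ k : ℤ, x₁ - c₁ = k) ∧ (∃ k : ℤ, x₂ - c₂ = k) ∧ (∃ k : ℤ, x₃ - c₃ = k) ∧
      (∃ k : ℤ, x₄ - c₄ = k) ∧ (∃ k : ℤ, x₅ - c₅ = k) ∧
      0 < -a * (x₃ + h₄*x₄ + h₅*x₅)^2 + (x₁ + a₂*x₂ + a₃*x₃ + a₄*x₄ + a₅*x₅) * x₂
            - (P * x₄^2 + B * x₄ * x₅ + C * x₅^2) ∧
      -a * (x₃ + h₄*x₄ + h₅*x₅)^2 + (x₁ + a₂*x₂ + a₃*x₃ + a₄*x₄ + a₅*x₅) * x₂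
            - (P * x₄^2 + B * x₄ * x₅ + C * x₅^2) < d :=
  lemma8_general h₄ h₅ a₂ a₃ a₄ a₅ ha had hposdef hdet.le c₁ c₂ c₃ c₄ c₅
end
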